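/- Type soundness of FG's evaluation at base type: If · ⊢_pc e : bool^{ℓ} is derivable in FG and the big-step evaluation of e from the empty heap terminates, then the resulting value is a boolean (true or false). -/

import Mathlib

/-!
Security labels play no role in the shape of results, so they are erased: `FGTy.erase` forgets
all labels, and FG subtyping becomes equality of erased types. An FG-typable expression is thus
typable in an ordinary simply typed calculus with references (`ErasedTyped`), which is
syntax-directed, has no pc-label and no subsumption, and carries a store typing so that locations
can be typed. For this calculus the usual preservation proof applies: weakening and substitution
give `ErasedTyped.preservation`, by induction on the evaluation, with a store typing that only
grows. The same induction shows that results are values, and the only values of erased boolean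
type are `tt` and `ff`.
-/

/-! ## Shared expression syntax for the FG and CG calculi (de Bruijn indices) -/

inductive Exp : Type where
  | var (n : ℕ)
  | lam (e : Exp)
  | app (e1 e2 : Exp)
  | pair (e1 e2 : Exp)
  | fst (e : Exp)
  | snd (e : Exp)
  | inl (e : Exp)
  | inr (e : Exp)
  | case (e e1 e2 : Exp)      -- the two branches each bind one variable
  | tt
  | ff
  | unit
  | loc (n : ℕ)
  | new (e : Exp)
  | deref (e : Exp)
  | assign (e1 e2 : Exp)
  | label (e : Exp)
  | unlabel (e : Exp)
  | toLabeled (e : Exp)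
  | ret (e : Exp)
  | bind (e1 e2 : Exp)        -- e2 binds one variable
deriving DecidableEq

namespace Exp

/-- Shift free de Bruijn indices `≥ c` up by one. -/
def shift (c : ℕ) : Exp → Exp
  | var n => if n < c then var n else var (n + 1)
  | lam e => lam (e.shift (c + 1))
  | app e1 e2 => app (e1.shift c) (e2.shift c)
  | pair e1 e2 => pair (e1.shift c) (e2.shift c)
  | fst e => fst (e.shift c)
  | snd e => snd (e.shift c)
  | inl e => inl (e.shift c)
  | inr e => inr (e.shift c)
  | case e e1 e2 => case (e.shift c) (e1.shift (c + 1)) (e2.shift (c + 1))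
  | tt => tt
  | ff => ff
  | unit => unit
  | loc n => loc n
  | new e => new (e.shift c)
  | deref e => deref (e.shift c)
  | assign e1 e2 => assign (e1.shift c) (e2.shift c)
  | label e => label (e.shift c)
  | unlabel e => unlabel (e.shift c)
  | toLabeled e => toLabeled (e.shift c)
  | ret e => ret (e.shift c)
  | bind e1 e2 => bind (e1.shift c) (e2.shift (c + 1))

/-- Substitution `e[v/k]` of `v` for de Bruijn index `k` in `e`. -/
def subst : Exp → Exp → ℕ → Exp
  | var n, v, k => if n = k then v else if k < n then var (n - 1) else var n
  | lam e, v, k => lam (e.subst (v.shift 0) (k + 1))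
  | app e1 e2, v, k => app (e1.subst v k) (e2.subst v k)
  | pair e1 e2, v, k => pair (e1.subst v k) (e2.subst v k)
  | fst e, v, k => fst (e.subst v k)
  | snd e, v, k => snd (e.subst v k)
  | inl e, v, k => inl (e.subst v k)
  | inr e, v, k => inr (e.subst v k)
  | case e e1 e2, v, k =>
      case (e.subst v k) (e1.subst (v.shift 0) (k + 1)) (e2.subst (v.shift 0) (k + 1))
  | tt, _, _ => tt
  | ff, _, _ => ff
  | unit, _, _ => unit
  | loc n, _, _ => loc n
  | new e, v, k => new (e.subst v k)
  | deref e, v, k => deref (e.subst v k)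
  | assign e1 e2, v, k => assign (e1.subst v k) (e2.subst v k)
  | label e, v, k => label (e.subst v k)
  | unlabel e, v, k => unlabel (e.subst v k)
  | toLabeled e, v, k => toLabeled (e.subst v k)
  | ret e, v, k => ret (e.subst v k)
  | bind e1 e2, v, k => bind (e1.subst v k) (e2.subst (v.shift 0) (k + 1))

end Exp

/-- Heaps: locations are list indices; allocation appends. -/
abbrev Heap := List Exp

/-! ## Values -/

/-- Values of the FG language. -/
inductive FGVal : Exp → Prop where
  | lam : FGVal (.lam e)
  | pair : FGVal v1 → FGVal v2 → FGVal (.pair v1 v2)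
  | inl : FGVal v → FGVal (.inl v)
  | inr : FGVal v → FGVal (.inr v)
  | tt : FGVal .tt
  | ff : FGVal .ff
  | unit : FGVal .unit
  | loc : FGVal (.loc n)

/-- Values of the CG language (monadic expressions are suspended computations,
hence values; labeled values are values). -/
inductive CGVal : Exp → Prop where
  | lam : CGVal (.lam e)
  | pair : CGVal v1 → CGVal v2 → CGVal (.pair v1 v2)
  | inl : CGVal v → CGVal (.inl v)
  | inr : CGVal v → CGVal (.inr v)
  | tt : CGVal .tt
  | ff : CGVal .ff
  | unit : CGVal .unit
  | loc : CGVal (.loc n)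
  | label : CGVal v → CGVal (.label v)
  | ret : CGVal (.ret e)
  | bind : CGVal (.bind e1 e2)
  | unlabel : CGVal (.unlabel e)
  | toLabeled : CGVal (.toLabeled e)
  | new : CGVal (.new e)
  | deref : CGVal (.deref e)
  | assign : CGVal (.assign e1 e2)

/-! ## FG: deterministic big-step call-by-value evaluation over heaps -/

inductive FGEval : Heap → Exp → Heap → Exp → Prop where
  | lam : FGEval h (.lam e) h (.lam e)
  | tt : FGEval h .tt h .tt
  | ff : FGEval h .ff h .ff
  | unit : FGEval h .unit h .unit
  | loc : FGEval h (.loc n) h (.loc n)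
  | app : FGEval h e1 h1 (.lam e) → FGEval h1 e2 h2 v2 →
      FGEval h2 (e.subst v2 0) h3 v → FGEval h (.app e1 e2) h3 v
  | pair : FGEval h e1 h1 v1 → FGEval h1 e2 h2 v2 →
      FGEval h (.pair e1 e2) h2 (.pair v1 v2)
  | fst : FGEval h e h1 (.pair v1 v2) → FGEval h (.fst e) h1 v1
  | snd : FGEval h e h1 (.pair v1 v2) → FGEval h (.snd e) h1 v2
  | inl : FGEval h e h1 v → FGEval h (.inl e) h1 (.inl v)
  | inr : FGEval h e h1 v → FGEval h (.inr e) h1 (.inr v)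
  | caseL : FGEval h e h1 (.inl v) → FGEval h1 (e1.subst v 0) h2 w →
      FGEval h (.case e e1 e2) h2 w
  | caseR : FGEval h e h1 (.inr v) → FGEval h1 (e2.subst v 0) h2 w →
      FGEval h (.case e e1 e2) h2 w
  | new : FGEval h e h1 v → FGEval h (.new e) (h1 ++ [v]) (.loc h1.length)
  | deref : FGEval h e h1 (.loc n) → h1[n]? = some v → FGEval h (.deref e) h1 v
  | assign : FGEval h e1 h1 (.loc n) → FGEval h1 e2 h2 v →
      FGEval h (.assign e1 e2) (h2.set n v) .unit

/-! ## CG: pure big-step evaluation (no heap) and forcing semantics over heaps -/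

/-- Pure (heap-free) big-step evaluation for CG.  Monadic expressions are
suspended computations and evaluate to themselves. -/
inductive CGPure : Exp → Exp → Prop where
  | lam : CGPure (.lam e) (.lam e)
  | tt : CGPure .tt .tt
  | ff : CGPure .ff .ff
  | unit : CGPure .unit .unit
  | loc : CGPure (.loc n) (.loc n)
  | app : CGPure e1 (.lam e) → CGPure e2 v2 → CGPure (e.subst v2 0) v →
      CGPure (.app e1 e2) v
  | pair : CGPure e1 v1 → CGPure e2 v2 → CGPure (.pair e1 e2) (.pair v1 v2)
  | fst : CGPure e (.pair v1 v2) → CGPure (.fst e) v1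
  | snd : CGPure e (.pair v1 v2) → CGPure (.snd e) v2
  | inl : CGPure e v → CGPure (.inl e) (.inl v)
  | inr : CGPure e v → CGPure (.inr e) (.inr v)
  | caseL : CGPure e (.inl v) → CGPure (e1.subst v 0) w → CGPure (.case e e1 e2) w
  | caseR : CGPure e (.inr v) → CGPure (e2.subst v 0) w → CGPure (.case e e1 e2) w
  | label : CGPure e v → CGPure (.label e) (.label v)
  | ret : CGPure (.ret e) (.ret e)
  | bind : CGPure (.bind e1 e2) (.bind e1 e2)
  | unlabel : CGPure (.unlabel e) (.unlabel e)
  | toLabeled : CGPure (.toLabeled e) (.toLabeled e)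
  | new : CGPure (.new e) (.new e)
  | deref : CGPure (.deref e) (.deref e)
  | assign : CGPure (.assign e1 e2) (.assign e1 e2)

/-- Forcing semantics for CG's monadic computations: actually performs heap
reads, writes and allocations. -/
inductive CGForce : Heap → Exp → Heap → Exp → Prop where
  | ret : CGPure e (.ret e0) → CGPure e0 v → CGForce h e h v
  | bind : CGPure e (.bind e1 e2) → CGForce h e1 h1 v1 →
      CGForce h1 (e2.subst v1 0) h2 v → CGForce h e h2 v
  | unlabel : CGPure e (.unlabel e0) → CGPure e0 (.label v) → CGForce h e h v
  | toLabeled : CGPure e (.toLabeled e0) → CGForce h e0 h1 v →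
      CGForce h e h1 (.label v)
  | new : CGPure e (.new e0) → CGPure e0 v → CGForce h e (h ++ [v]) (.loc h.length)
  | deref : CGPure e (.deref e0) → CGPure e0 (.loc n) → h[n]? = some v →
      CGForce h e h v
  | assign : CGPure e (.assign e1 e2) → CGPure e1 (.loc n) → CGPure e2 v →
      CGForce h e (h.set n v) .unit

/-! ## FG types (every type constructor carries its outer security label) -/

inductive FGTy (L : Type) : Type where
  | bool (l : L)
  | unit (l : L)
  | fn (t1 : FGTy L) (le : L) (t2 : FGTy L) (l : L)
  | prod (t1 t2 : FGTy L) (l : L)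
  | sum (t1 t2 : FGTy L) (l : L)
  | ref (t : FGTy L) (l : L)

/-- The outer label of an FG type (`(A^ℓ).lab = ℓ`).
`τ.lab ≥ ℓ` is the protection judgment `τ ↘ ℓ`. -/
def FGTy.lab {L : Type} : FGTy L → L
  | .bool l => l
  | .unit l => l
  | .fn _ _ _ l => l
  | .prod _ _ l => l
  | .sum _ _ l => l
  | .ref _ l => l

/-- FG subtyping: structural, covariant in security labels, contravariant in
the pc-label of function types, invariant in the content type of references. -/
inductive FGSub {L : Type} [Lattice L] [BoundedOrder L] : FGTy L → FGTy L → Prop where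
  | bool : l ≤ l' → FGSub (.bool l) (.bool l')
  | unit : l ≤ l' → FGSub (.unit l) (.unit l')
  | fn : FGSub τ1' τ1 → le' ≤ le → FGSub τ2 τ2' → l ≤ l' →
      FGSub (.fn τ1 le τ2 l) (.fn τ1' le' τ2' l')
  | prod : FGSub τ1 τ1' → FGSub τ2 τ2' → l ≤ l' →
      FGSub (.prod τ1 τ2 l) (.prod τ1' τ2' l')
  | sum : FGSub τ1 τ1' → FGSub τ2 τ2' → l ≤ l' →
      FGSub (.sum τ1 τ2 l) (.sum τ1' τ2' l')
  | ref : l ≤ l' → FGSub (.ref τ l) (.ref τ l')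

/-- The FG typing judgment `Γ ⊢_pc e : τ`. -/
inductive FGTyped {L : Type} [Lattice L] [BoundedOrder L] :
    List (FGTy L) → L → Exp → FGTy L → Prop where
  | var : Γ[n]? = some τ → FGTyped Γ pc (.var n) τ
  | tt : FGTyped Γ pc .tt (.bool ⊥)
  | ff : FGTyped Γ pc .ff (.bool ⊥)
  | unit : FGTyped Γ pc .unit (.unit ⊥)
  | lam : FGTyped (τ1 :: Γ) le e τ2 → FGTyped Γ pc (.lam e) (.fn τ1 le τ2 ⊥)
  | app : FGTyped Γ pc e1 (.fn τ1 le τ2 l) → FGTyped Γ pc e2 τ1 →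
      l ⊔ pc ≤ le → l ≤ τ2.lab → FGTyped Γ pc (.app e1 e2) τ2
  | pair : FGTyped Γ pc e1 τ1 → FGTyped Γ pc e2 τ2 →
      FGTyped Γ pc (.pair e1 e2) (.prod τ1 τ2 ⊥)
  | fst : FGTyped Γ pc e (.prod τ1 τ2 l) → l ≤ τ1.lab → FGTyped Γ pc (.fst e) τ1
  | snd : FGTyped Γ pc e (.prod τ1 τ2 l) → l ≤ τ2.lab → FGTyped Γ pc (.snd e) τ2
  | inl : FGTyped Γ pc e τ1 → FGTyped Γ pc (.inl e) (.sum τ1 τ2 ⊥)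
  | inr : FGTyped Γ pc e τ2 → FGTyped Γ pc (.inr e) (.sum τ1 τ2 ⊥)
  | case : FGTyped Γ pc e (.sum τ1 τ2 l) → FGTyped (τ1 :: Γ) (pc ⊔ l) e1 τ →
      FGTyped (τ2 :: Γ) (pc ⊔ l) e2 τ → l ≤ τ.lab →
      FGTyped Γ pc (.case e e1 e2) τ
  | new : FGTyped Γ pc e τ → pc ≤ τ.lab → FGTyped Γ pc (.new e) (.ref τ ⊥)
  | deref : FGTyped Γ pc e (.ref τ l) → FGSub τ τ' → l ≤ τ'.lab →
      FGTyped Γ pc (.deref e) τ'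
  | assign : FGTyped Γ pc e1 (.ref τ l) → FGTyped Γ pc e2 τ →
      pc ⊔ l ≤ τ.lab → FGTyped Γ pc (.assign e1 e2) (.unit ⊥)
  | sub : FGTyped Γ pc' e τ' → FGSub τ' τ → pc ≤ pc' → FGTyped Γ pc e τ

/-! ## CG types -/

inductive CGTy (L : Type) : Type where
  | bool
  | unit
  | fn (t1 t2 : CGTy L)
  | prod (t1 t2 : CGTy L)
  | sum (t1 t2 : CGTy L)
  | ref (l : L) (t : CGTy L)
  | labeled (l : L) (t : CGTy L)
  | monad (l1 l2 : L) (t : CGTy L)   -- CG ℓ1 ℓ2 τ : pc-label ℓ1, taint label ℓ2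

/-- CG subtyping: `Labeled ℓ τ` covariant in `ℓ` and `τ`; `CG ℓ1 ℓ2 τ`
contravariant in `ℓ1`, covariant in `ℓ2` and `τ`. -/
inductive CGSub {L : Type} [Lattice L] [BoundedOrder L] : CGTy L → CGTy L → Prop where
  | bool : CGSub .bool .bool
  | unit : CGSub .unit .unit
  | fn : CGSub τ1' τ1 → CGSub τ2 τ2' → CGSub (.fn τ1 τ2) (.fn τ1' τ2')
  | prod : CGSub τ1 τ1' → CGSub τ2 τ2' → CGSub (.prod τ1 τ2) (.prod τ1' τ2')
  | sum : CGSub τ1 τ1' → CGSub τ2 τ2' → CGSub (.sum τ1 τ2) (.sum τ1' τ2')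
  | ref : CGSub (.ref l τ) (.ref l τ)
  | labeled : CGSub τ τ' → l ≤ l' → CGSub (.labeled l τ) (.labeled l' τ')
  | monad : l1' ≤ l1 → l2 ≤ l2' → CGSub τ τ' →
      CGSub (.monad l1 l2 τ) (.monad l1' l2' τ')

/-- The CG typing judgment `Γ ⊢ e : τ`. -/
inductive CGTyped {L : Type} [Lattice L] [BoundedOrder L] :
    List (CGTy L) → Exp → CGTy L → Prop where
  | var : Γ[n]? = some τ → CGTyped Γ (.var n) τ
  | tt : CGTyped Γ .tt .bool
  | ff : CGTyped Γ .ff .bool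
  | unit : CGTyped Γ .unit .unit
  | lam : CGTyped (τ1 :: Γ) e τ2 → CGTyped Γ (.lam e) (.fn τ1 τ2)
  | app : CGTyped Γ e1 (.fn τ1 τ2) → CGTyped Γ e2 τ1 → CGTyped Γ (.app e1 e2) τ2
  | pair : CGTyped Γ e1 τ1 → CGTyped Γ e2 τ2 → CGTyped Γ (.pair e1 e2) (.prod τ1 τ2)
  | fst : CGTyped Γ e (.prod τ1 τ2) → CGTyped Γ (.fst e) τ1
  | snd : CGTyped Γ e (.prod τ1 τ2) → CGTyped Γ (.snd e) τ2
  | inl : CGTyped Γ e τ1 → CGTyped Γ (.inl e) (.sum τ1 τ2)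
  | inr : CGTyped Γ e τ2 → CGTyped Γ (.inr e) (.sum τ1 τ2)
  | case : CGTyped Γ e (.sum τ1 τ2) → CGTyped (τ1 :: Γ) e1 τ →
      CGTyped (τ2 :: Γ) e2 τ → CGTyped Γ (.case e e1 e2) τ
  | ret : CGTyped Γ e τ → CGTyped Γ (.ret e) (.monad ⊤ ⊥ τ)
  | bind : CGTyped Γ e1 (.monad l1 l2 τ) → CGTyped (τ :: Γ) e2 (.monad l3 l4 τ') →
      l ≤ l1 → l ≤ l3 → l2 ≤ l3 → l2 ≤ l4 →
      CGTyped Γ (.bind e1 e2) (.monad l l4 τ')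
  | label : CGTyped Γ e τ → CGTyped Γ (.label e) (.labeled l τ)
  | unlabel : CGTyped Γ e (.labeled l τ) → CGTyped Γ (.unlabel e) (.monad ⊤ l τ)
  | new : CGTyped Γ e (.labeled l τ) → CGTyped Γ (.new e) (.monad l ⊥ (.ref l τ))
  | deref : CGTyped Γ e (.ref l' τ) → CGTyped Γ (.deref e) (.monad ⊤ ⊥ (.labeled l' τ))
  | assign : CGTyped Γ e1 (.ref l τ) → CGTyped Γ e2 (.labeled l τ) →
      CGTyped Γ (.assign e1 e2) (.monad l ⊥ .unit)
  | toLabeled : CGTyped Γ e (.monad l l' τ) →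
      CGTyped Γ (.toLabeled e) (.monad l ⊥ (.labeled l' τ))
  | sub : CGTyped Γ e τ' → CGSub τ' τ → CGTyped Γ e τ

/-! ## The CG-to-FG type translation ⟦·⟧ -/

def toFG {L : Type} [Lattice L] [BoundedOrder L] : CGTy L → FGTy L
  | .bool => .bool ⊥
  | .unit => .unit ⊥
  | .fn τ1 τ2 => .fn (toFG τ1) ⊤ (toFG τ2) ⊥
  | .prod τ1 τ2 => .prod (toFG τ1) (toFG τ2) ⊥
  | .sum τ1 τ2 => .sum (toFG τ1) (toFG τ2) ⊥
  | .ref l τ => .ref (.sum (toFG τ) (.unit ⊥) l) ⊥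
  | .labeled l τ => .sum (toFG τ) (.unit ⊥) l
  | .monad l1 l2 τ => .fn (.unit ⊥) l1 (.sum (toFG τ) (.unit ⊥) l2) ⊥

/-! ## The FG-to-CG type translation: ⟦A^ℓ⟧ = Labeled ℓ ⟨A⟩ -/

/-- `⟨A⟩`: translation of the unlabeled part of an FG type. -/
def trA {L : Type} [Lattice L] [BoundedOrder L] : FGTy L → CGTy L
  | .bool _ => .bool
  | .unit _ => .unit
  | .fn τ1 le τ2 _ =>
      .fn (.labeled τ1.lab (trA τ1)) (.monad le ⊥ (.labeled τ2.lab (trA τ2)))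
  | .prod τ1 τ2 _ => .prod (.labeled τ1.lab (trA τ1)) (.labeled τ2.lab (trA τ2))
  | .sum τ1 τ2 _ => .sum (.labeled τ1.lab (trA τ1)) (.labeled τ2.lab (trA τ2))
  | .ref τ _ => .ref τ.lab (trA τ)

/-- `⟦A^ℓ⟧ = Labeled ℓ ⟨A⟩`. -/
def toCG {L : Type} [Lattice L] [BoundedOrder L] (τ : FGTy L) : CGTy L :=
  .labeled τ.lab (trA τ)

/-! ## CG-to-FG expression translation `Γ ⊢ e : τ ⇝ e_F` -/

inductive CG2FG {L : Type} [Lattice L] [BoundedOrder L] :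
    List (CGTy L) → Exp → CGTy L → Exp → Prop where
  | var : Γ[n]? = some τ → CG2FG Γ (.var n) τ (.var n)
  | tt : CG2FG Γ .tt .bool .tt
  | ff : CG2FG Γ .ff .bool .ff
  | unit : CG2FG Γ .unit .unit .unit
  | lam : CG2FG (τ1 :: Γ) e τ2 eF → CG2FG Γ (.lam e) (.fn τ1 τ2) (.lam eF)
  | app : CG2FG Γ e1 (.fn τ1 τ2) eF1 → CG2FG Γ e2 τ1 eF2 →
      CG2FG Γ (.app e1 e2) τ2 (.app eF1 eF2)
  | pair : CG2FG Γ e1 τ1 eF1 → CG2FG Γ e2 τ2 eF2 →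
      CG2FG Γ (.pair e1 e2) (.prod τ1 τ2) (.pair eF1 eF2)
  | fst : CG2FG Γ e (.prod τ1 τ2) eF → CG2FG Γ (.fst e) τ1 (.fst eF)
  | snd : CG2FG Γ e (.prod τ1 τ2) eF → CG2FG Γ (.snd e) τ2 (.snd eF)
  | inl : CG2FG Γ e τ1 eF → CG2FG Γ (.inl e) (.sum τ1 τ2) (.inl eF)
  | inr : CG2FG Γ e τ2 eF → CG2FG Γ (.inr e) (.sum τ1 τ2) (.inr eF)
  | case : CG2FG Γ e (.sum τ1 τ2) eF → CG2FG (τ1 :: Γ) e1 τ eF1 →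
      CG2FG (τ2 :: Γ) e2 τ eF2 → CG2FG Γ (.case e e1 e2) τ (.case eF eF1 eF2)
  | label : CG2FG Γ e τ eF → CG2FG Γ (.label e) (.labeled l τ) (.inl eF)
  | unlabel : CG2FG Γ e (.labeled l τ) eF →
      CG2FG Γ (.unlabel e) (.monad ⊤ l τ) (.lam (eF.shift 0))
  | toLabeled : CG2FG Γ e (.monad l1 l2 τ) eF →
      CG2FG Γ (.toLabeled e) (.monad l1 ⊥ (.labeled l2 τ))
        (.lam (.inl (.app (eF.shift 0) .unit)))
  | ret : CG2FG Γ e τ eF → CG2FG Γ (.ret e) (.monad ⊤ ⊥ τ) (.lam (.inl (eF.shift 0)))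
  | bind : CG2FG Γ e1 (.monad l1 l2 τ) eF1 →
      CG2FG (τ :: Γ) e2 (.monad l3 l4 τ') eF2 →
      l ≤ l1 → l ≤ l3 → l2 ≤ l3 → l2 ≤ l4 →
      CG2FG Γ (.bind e1 e2) (.monad l l4 τ')
        (.lam (.case (.app (eF1.shift 0) .unit) (.app (eF2.shift 1) .unit)
          (.inr .unit)))
  | new : CG2FG Γ e (.labeled l τ) eF →
      CG2FG Γ (.new e) (.monad l ⊥ (.ref l τ)) (.lam (.inl (.new (eF.shift 0))))
  | deref : CG2FG Γ e (.ref l' τ) eF →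
      CG2FG Γ (.deref e) (.monad ⊤ ⊥ (.labeled l' τ))
        (.lam (.inl (.deref (eF.shift 0))))
  | assign : CG2FG Γ e1 (.ref l τ) eF1 → CG2FG Γ e2 (.labeled l τ) eF2 →
      CG2FG Γ (.assign e1 e2) (.monad l ⊥ .unit)
        (.lam (.inl (.assign (eF1.shift 0) (eF2.shift 0))))
  | sub : CG2FG Γ e τ' eF → CGSub τ' τ → CG2FG Γ e τ eF

/-! ## FG-to-CG expression translation `Γ ⊢_pc e : τ ⇝ e_c` -/

/-- `coerce_taint ≜ λx. toLabeled(bind(x, y. unlabel y))`. -/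
def coerceTaint : Exp := .lam (.toLabeled (.bind (.var 0) (.unlabel (.var 0))))

inductive FG2CG {L : Type} [Lattice L] [BoundedOrder L] :
    List (FGTy L) → L → Exp → FGTy L → Exp → Prop where
  | var : Γ[n]? = some τ → FG2CG Γ pc (.var n) τ (.ret (.var n))
  | tt : FG2CG Γ pc .tt (.bool ⊥) (.ret (.label .tt))
  | ff : FG2CG Γ pc .ff (.bool ⊥) (.ret (.label .ff))
  | unit : FG2CG Γ pc .unit (.unit ⊥) (.ret (.label .unit))
  | lam : FG2CG (τ1 :: Γ) le e τ2 ec →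
      FG2CG Γ pc (.lam e) (.fn τ1 le τ2 ⊥) (.ret (.label (.lam ec)))
  | app : FG2CG Γ pc e1 (.fn τ1 le τ2 l) ec1 → FG2CG Γ pc e2 τ1 ec2 →
      l ⊔ pc ≤ le → l ≤ τ2.lab →
      FG2CG Γ pc (.app e1 e2) τ2
        (.app coerceTaint
          (.bind ec1 (.bind (ec2.shift 0)
            (.bind (.unlabel (.var 1)) (.app (.var 0) (.var 1))))))
  | pair : FG2CG Γ pc e1 τ1 ec1 → FG2CG Γ pc e2 τ2 ec2 →
      FG2CG Γ pc (.pair e1 e2) (.prod τ1 τ2 ⊥)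
        (.bind ec1 (.bind (ec2.shift 0) (.ret (.label (.pair (.var 1) (.var 0))))))
  | fst : FG2CG Γ pc e (.prod τ1 τ2 l) ec → l ≤ τ1.lab →
      FG2CG Γ pc (.fst e) τ1
        (.app coerceTaint
          (.bind ec (.bind (.unlabel (.var 0)) (.ret (.fst (.var 0))))))
  | snd : FG2CG Γ pc e (.prod τ1 τ2 l) ec → l ≤ τ2.lab →
      FG2CG Γ pc (.snd e) τ2
        (.app coerceTaint
          (.bind ec (.bind (.unlabel (.var 0)) (.ret (.snd (.var 0))))))
  | inl : FG2CG Γ pc e τ1 ec →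
      FG2CG Γ pc (.inl e) (.sum τ1 τ2 ⊥) (.bind ec (.ret (.label (.inl (.var 0)))))
  | inr : FG2CG Γ pc e τ2 ec →
      FG2CG Γ pc (.inr e) (.sum τ1 τ2 ⊥) (.bind ec (.ret (.label (.inr (.var 0)))))
  | case : FG2CG Γ pc e (.sum τ1 τ2 l) ec →
      FG2CG (τ1 :: Γ) (pc ⊔ l) e1 τ ec1 → FG2CG (τ2 :: Γ) (pc ⊔ l) e2 τ ec2 →
      l ≤ τ.lab →
      FG2CG Γ pc (.case e e1 e2) τ
        (.app coerceTaint
          (.bind ec (.bind (.unlabel (.var 0))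
            (.case (.var 0) ((ec1.shift 1).shift 1) ((ec2.shift 1).shift 1)))))
  | new : FG2CG Γ pc e τ ec → pc ≤ τ.lab →
      FG2CG Γ pc (.new e) (.ref τ ⊥)
        (.bind ec (.bind (.new (.var 0)) (.ret (.label (.var 0)))))
  | deref : FG2CG Γ pc e (.ref τ l) ec → FGSub τ τ' → l ≤ τ'.lab →
      FG2CG Γ pc (.deref e) τ'
        (.app coerceTaint
          (.bind ec (.bind (.unlabel (.var 0)) (.deref (.var 0)))))
  | assign : FG2CG Γ pc e1 (.ref τ l) ec1 → FG2CG Γ pc e2 τ ec2 →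
      pc ⊔ l ≤ τ.lab →
      FG2CG Γ pc (.assign e1 e2) (.unit ⊥)
        (.bind (.toLabeled (.bind ec1 (.bind (ec2.shift 0)
          (.bind (.unlabel (.var 1)) (.assign (.var 0) (.var 1))))))
          (.ret (.label .unit)))
  | sub : FG2CG Γ pc' e τ' ec → FGSub τ' τ → pc ≤ pc' → FG2CG Γ pc e τ ec

/-! ### Erasure of security labels -/

/-- FG types with all security labels removed. -/
inductive ErasedTy : Type where
  | bool
  | unit
  | fn (t1 t2 : ErasedTy)
  | prod (t1 t2 : ErasedTy)
  | sum (t1 t2 : ErasedTy)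
  | ref (t : ErasedTy)

/-- Erasure of the labels of an FG type, including the pc-label of function types. -/
def FGTy.erase {L : Type} : FGTy L → ErasedTy
  | .bool _ => .bool
  | .unit _ => .unit
  | .fn t1 _ t2 _ => .fn t1.erase t2.erase
  | .prod t1 t2 _ => .prod t1.erase t2.erase
  | .sum t1 t2 _ => .sum t1.erase t2.erase
  | .ref t _ => .ref t.erase

/-- Label-free typing `S; Γ ⊢ e : τ`, where the store typing `S` lists the content types of the
allocated locations. -/
inductive ErasedTyped (S : List ErasedTy) : List ErasedTy → Exp → ErasedTy → Prop where
  | var {Γ n τ} : Γ[n]? = some τ → ErasedTyped S Γ (.var n) τ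
  | tt {Γ} : ErasedTyped S Γ .tt .bool
  | ff {Γ} : ErasedTyped S Γ .ff .bool
  | unit {Γ} : ErasedTyped S Γ .unit .unit
  | loc {Γ n τ} : S[n]? = some τ → ErasedTyped S Γ (.loc n) (.ref τ)
  | lam {Γ e τ1 τ2} : ErasedTyped S (τ1 :: Γ) e τ2 → ErasedTyped S Γ (.lam e) (.fn τ1 τ2)
  | app {Γ e1 e2 τ1 τ2} : ErasedTyped S Γ e1 (.fn τ1 τ2) → ErasedTyped S Γ e2 τ1 →
      ErasedTyped S Γ (.app e1 e2) τ2
  | pair {Γ e1 e2 τ1 τ2} : ErasedTyped S Γ e1 τ1 → ErasedTyped S Γ e2 τ2 →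
      ErasedTyped S Γ (.pair e1 e2) (.prod τ1 τ2)
  | fst {Γ e τ1 τ2} : ErasedTyped S Γ e (.prod τ1 τ2) → ErasedTyped S Γ (.fst e) τ1
  | snd {Γ e τ1 τ2} : ErasedTyped S Γ e (.prod τ1 τ2) → ErasedTyped S Γ (.snd e) τ2
  | inl {Γ e τ1 τ2} : ErasedTyped S Γ e τ1 → ErasedTyped S Γ (.inl e) (.sum τ1 τ2)
  | inr {Γ e τ1 τ2} : ErasedTyped S Γ e τ2 → ErasedTyped S Γ (.inr e) (.sum τ1 τ2)
  | case {Γ e e1 e2 τ1 τ2 τ} : ErasedTyped S Γ e (.sum τ1 τ2) →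
      ErasedTyped S (τ1 :: Γ) e1 τ → ErasedTyped S (τ2 :: Γ) e2 τ →
      ErasedTyped S Γ (.case e e1 e2) τ
  | new {Γ e τ} : ErasedTyped S Γ e τ → ErasedTyped S Γ (.new e) (.ref τ)
  | deref {Γ e τ} : ErasedTyped S Γ e (.ref τ) → ErasedTyped S Γ (.deref e) τ
  | assign {Γ e1 e2 τ} : ErasedTyped S Γ e1 (.ref τ) → ErasedTyped S Γ e2 τ →
      ErasedTyped S Γ (.assign e1 e2) .unit

theorem FGSub.erase_eq {L : Type} [Lattice L] [BoundedOrder L] {t t' : FGTy L}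
    (h : FGSub t t') : t.erase = t'.erase := by
  induction h <;> simp_all [FGTy.erase]

theorem FGTyped.erase {L : Type} [Lattice L] [BoundedOrder L] {Γ : List (FGTy L)} {pc : L}
    {e : Exp} {τ : FGTy L} (h : FGTyped Γ pc e τ) :
    ErasedTyped [] (Γ.map FGTy.erase) e τ.erase := by
  induction h with
  | var h => exact .var (by simp [h])
  | tt => exact .tt
  | ff => exact .ff
  | unit => exact .unit
  | lam _ ih => exact .lam ih
  | app _ _ _ _ ih1 ih2 => exact .app ih1 ih2
  | pair _ _ ih1 ih2 => exact .pair ih1 ih2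
  | fst _ _ ih => exact .fst ih
  | snd _ _ ih => exact .snd ih
  | inl _ ih => exact .inl ih
  | inr _ ih => exact .inr ih
  | case _ _ _ _ ih ih1 ih2 => exact .case ih ih1 ih2
  | new _ _ ih => exact .new ih
  | deref _ hs _ ih => exact hs.erase_eq ▸ .deref ih
  | assign _ _ _ ih1 ih2 => exact .assign ih1 ih2
  | sub _ hs _ ih => exact hs.erase_eq ▸ ih

/-! ### Weakening and substitution -/

namespace ErasedTyped

theorem mono {S S' : List ErasedTy} (hS : S <+: S') {Γ : List ErasedTy} {e : Exp}
    {τ : ErasedTy} (h : ErasedTyped S Γ e τ) : ErasedTyped S' Γ e τ := by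
  induction h with
  | loc h =>
    obtain ⟨T, rfl⟩ := hS
    exact .loc (by
      rw [List.getElem?_append_left (List.getElem?_eq_some_iff.1 h).1]; exact h)
  | var h => exact .var h
  | tt => exact .tt
  | ff => exact .ff
  | unit => exact .unit
  | lam _ ih => exact .lam ih
  | app _ _ ih1 ih2 => exact .app ih1 ih2
  | pair _ _ ih1 ih2 => exact .pair ih1 ih2
  | fst _ ih => exact .fst ih
  | snd _ ih => exact .snd ih
  | inl _ ih => exact .inl ih
  | inr _ ih => exact .inr ih
  | case _ _ _ ih ih1 ih2 => exact .case ih ih1 ih2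
  | new _ ih => exact .new ih
  | deref _ ih => exact .deref ih
  | assign _ _ ih1 ih2 => exact .assign ih1 ih2

theorem shift {S Γ : List ErasedTy} {e : Exp} {τ : ErasedTy} (h : ErasedTyped S Γ e τ)
    (σ : ErasedTy) (Γ1 Γ2 : List ErasedTy) (hΓ : Γ = Γ1 ++ Γ2) :
    ErasedTyped S (Γ1 ++ σ :: Γ2) (e.shift Γ1.length) τ := by
  induction h generalizing Γ1 with
  | @var Γ n τ h =>
    subst hΓ
    simp only [Exp.shift]
    split
    · rename_i hn
      rw [List.getElem?_append_left hn] at h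
      exact .var (by rw [List.getElem?_append_left hn]; exact h)
    · rename_i hn
      rw [List.getElem?_append_right (by omega)] at h
      refine .var ?_
      rw [List.getElem?_append_right (by omega), Nat.sub_add_comm (by omega)]
      simpa using h
  | loc h => exact .loc h
  | tt => exact .tt
  | ff => exact .ff
  | unit => exact .unit
  | @lam Γ e τ1 τ2 _ ih => exact .lam (ih (τ1 :: Γ1) (by simp [hΓ]))
  | app _ _ ih1 ih2 => exact .app (ih1 _ hΓ) (ih2 _ hΓ)
  | pair _ _ ih1 ih2 => exact .pair (ih1 _ hΓ) (ih2 _ hΓ)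
  | fst _ ih => exact .fst (ih _ hΓ)
  | snd _ ih => exact .snd (ih _ hΓ)
  | inl _ ih => exact .inl (ih _ hΓ)
  | inr _ ih => exact .inr (ih _ hΓ)
  | @case Γ e e1 e2 τ1 τ2 τ _ _ _ ih ih1 ih2 =>
    exact .case (ih _ hΓ) (ih1 (τ1 :: Γ1) (by simp [hΓ])) (ih2 (τ2 :: Γ1) (by simp [hΓ]))
  | new _ ih => exact .new (ih _ hΓ)
  | deref _ ih => exact .deref (ih _ hΓ)
  | assign _ _ ih1 ih2 => exact .assign (ih1 _ hΓ) (ih2 _ hΓ)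

theorem subst {S Γ : List ErasedTy} {e : Exp} {τ : ErasedTy} (h : ErasedTyped S Γ e τ)
    {σ : ErasedTy} (Γ1 Γ2 : List ErasedTy) (hΓ : Γ = Γ1 ++ σ :: Γ2) {v : Exp}
    (hv : ErasedTyped S (Γ1 ++ Γ2) v σ) :
    ErasedTyped S (Γ1 ++ Γ2) (e.subst v Γ1.length) τ := by
  induction h generalizing Γ1 v with
  | @var Γ n τ h =>
    subst hΓ
    simp only [Exp.subst]
    split
    · rename_i hn
      subst hn
      simp only [List.getElem?_append_right (le_refl _), Nat.sub_self,
        List.getElem?_cons_zero, Option.some.injEq] at h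
      exact h ▸ hv
    · split
      · rename_i hne hn
        refine .var ?_
        rw [List.getElem?_append_right (by omega)] at h ⊢
        obtain ⟨m, rfl⟩ : ∃ m, n = Γ1.length + m + 1 := ⟨n - Γ1.length - 1, by omega⟩
        rw [show Γ1.length + m + 1 - Γ1.length = m + 1 by omega] at h
        rw [show Γ1.length + m + 1 - 1 - Γ1.length = m by omega]
        simpa using h
      · rename_i hne hn
        have hn' : n < Γ1.length := by omega
        rw [List.getElem?_append_left hn'] at h
        exact .var (by rw [List.getElem?_append_left hn']; exact h)
  | loc h => exact .loc h
  | tt => exact .tt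
  | ff => exact .ff
  | unit => exact .unit
  | @lam Γ e τ1 τ2 _ ih =>
    exact .lam (ih (τ1 :: Γ1) (by simp [hΓ]) (hv.shift τ1 [] _ rfl))
  | app _ _ ih1 ih2 => exact .app (ih1 _ hΓ hv) (ih2 _ hΓ hv)
  | pair _ _ ih1 ih2 => exact .pair (ih1 _ hΓ hv) (ih2 _ hΓ hv)
  | fst _ ih => exact .fst (ih _ hΓ hv)
  | snd _ ih => exact .snd (ih _ hΓ hv)
  | inl _ ih => exact .inl (ih _ hΓ hv)
  | inr _ ih => exact .inr (ih _ hΓ hv)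
  | @case Γ e e1 e2 τ1 τ2 τ _ _ _ ih ih1 ih2 =>
    exact .case (ih _ hΓ hv) (ih1 (τ1 :: Γ1) (by simp [hΓ]) (hv.shift τ1 [] _ rfl))
      (ih2 (τ2 :: Γ1) (by simp [hΓ]) (hv.shift τ2 [] _ rfl))
  | new _ ih => exact .new (ih _ hΓ hv)
  | deref _ ih => exact .deref (ih _ hΓ hv)
  | assign _ _ ih1 ih2 => exact .assign (ih1 _ hΓ hv) (ih2 _ hΓ hv)

end ErasedTyped

/-! ### Well-typed heaps and preservation -/

/-- The heap `h` holds closed values whose types are listed by the store typing `S`. -/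
def HeapTyped (S : List ErasedTy) (h : Heap) : Prop :=
  h.length = S.length ∧
    ∀ (n : ℕ) (v : Exp) (τ : ErasedTy), h[n]? = some v → S[n]? = some τ →
      ErasedTyped S [] v τ ∧ FGVal v

theorem HeapTyped.append {S : List ErasedTy} {h : Heap} (hh : HeapTyped S h) {v : Exp}
    {τ : ErasedTy} (hv : ErasedTyped S [] v τ) (hval : FGVal v) :
    HeapTyped (S ++ [τ]) (h ++ [v]) := by
  refine ⟨by simp [hh.1], fun n w σ hw hσ => ?_⟩
  have hlen := hh.1
  by_cases hn : n < h.length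
  · rw [List.getElem?_append_left hn] at hw
    rw [List.getElem?_append_left (by omega)] at hσ
    have := hh.2 n w σ hw hσ
    exact ⟨this.1.mono (List.prefix_append _ _), this.2⟩
  · have hn' : n = h.length := by
      have := (List.getElem?_eq_some_iff.1 hw).1
      simp at this
      omega
    subst hn'
    simp only [List.getElem?_concat_length, Option.some.injEq] at hw
    rw [hlen] at hσ
    simp only [List.getElem?_concat_length, Option.some.injEq] at hσ
    subst hw hσ
    exact ⟨hv.mono (List.prefix_append _ _), hval⟩

theorem HeapTyped.set {S : List ErasedTy} {h : Heap} (hh : HeapTyped S h) {v : Exp}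
    {τ : ErasedTy} {n : ℕ} (hn : S[n]? = some τ) (hv : ErasedTyped S [] v τ) (hval : FGVal v) :
    HeapTyped S (h.set n v) := by
  refine ⟨by simp [hh.1], fun m w σ hw hσ => ?_⟩
  by_cases hm : n = m
  · subst hm
    have hlt : n < h.length := by
      simpa using (List.getElem?_eq_some_iff.1 hw).1
    rw [List.getElem?_set_self hlt] at hw
    rw [hn] at hσ
    cases hw
    cases hσ
    exact ⟨hv, hval⟩
  · rw [List.getElem?_set_ne hm] at hw
    exact hh.2 m w σ hw hσ

/-- Preservation: evaluation from a well-typed heap ends, for some extension of the store typing,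
in a well-typed heap and a value of the type of the evaluated expression. -/
theorem ErasedTyped.preservation {h h' : Heap} {e v : Exp} (hev : FGEval h e h' v)
    {S : List ErasedTy} {τ : ErasedTy} (he : ErasedTyped S [] e τ) (hh : HeapTyped S h) :
    ∃ S', S <+: S' ∧ HeapTyped S' h' ∧ ErasedTyped S' [] v τ ∧ FGVal v := by
  induction hev generalizing S τ with
  | lam => exact ⟨S, List.prefix_rfl, hh, he, .lam⟩
  | tt => exact ⟨S, List.prefix_rfl, hh, he, .tt⟩
  | ff => exact ⟨S, List.prefix_rfl, hh, he, .ff⟩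
  | unit => exact ⟨S, List.prefix_rfl, hh, he, .unit⟩
  | loc => exact ⟨S, List.prefix_rfl, hh, he, .loc⟩
  | app _ _ _ ih1 ih2 ih3 =>
    cases he with | app he1 he2 =>
    obtain ⟨S1, hS1, hh1, hv1, _⟩ := ih1 he1 hh
    obtain ⟨S2, hS2, hh2, hv2, _⟩ := ih2 (he2.mono hS1) hh1
    cases hv1 with | lam hb =>
    obtain ⟨S3, hS3, hh3, hv3, hval⟩ := ih3 ((hb.mono hS2).subst [] [] rfl hv2) hh2
    exact ⟨S3, (hS1.trans hS2).trans hS3, hh3, hv3, hval⟩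
  | pair _ _ ih1 ih2 =>
    cases he with | pair he1 he2 =>
    obtain ⟨S1, hS1, hh1, hv1, hval1⟩ := ih1 he1 hh
    obtain ⟨S2, hS2, hh2, hv2, hval2⟩ := ih2 (he2.mono hS1) hh1
    exact ⟨S2, hS1.trans hS2, hh2, .pair (hv1.mono hS2) hv2, .pair hval1 hval2⟩
  | fst _ ih =>
    cases he with | fst he =>
    obtain ⟨S1, hS1, hh1, hv1, hval1⟩ := ih he hh
    cases hv1 with | pair ha hb =>
    cases hval1 with | pair hva hvb =>
    exact ⟨S1, hS1, hh1, ha, hva⟩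
  | snd _ ih =>
    cases he with | snd he =>
    obtain ⟨S1, hS1, hh1, hv1, hval1⟩ := ih he hh
    cases hv1 with | pair ha hb =>
    cases hval1 with | pair hva hvb =>
    exact ⟨S1, hS1, hh1, hb, hvb⟩
  | inl _ ih =>
    cases he with | inl he =>
    obtain ⟨S1, hS1, hh1, hv1, hval1⟩ := ih he hh
    exact ⟨S1, hS1, hh1, .inl hv1, .inl hval1⟩
  | inr _ ih =>
    cases he with | inr he =>
    obtain ⟨S1, hS1, hh1, hv1, hval1⟩ := ih he hh
    exact ⟨S1, hS1, hh1, .inr hv1, .inr hval1⟩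
  | caseL _ _ ih1 ih2 =>
    cases he with | case he hl hr =>
    obtain ⟨S1, hS1, hh1, hv1, _⟩ := ih1 he hh
    cases hv1 with | inl hw =>
    obtain ⟨S2, hS2, hh2, hv2, hval⟩ := ih2 ((hl.mono hS1).subst [] [] rfl hw) hh1
    exact ⟨S2, hS1.trans hS2, hh2, hv2, hval⟩
  | caseR _ _ ih1 ih2 =>
    cases he with | case he hl hr =>
    obtain ⟨S1, hS1, hh1, hv1, _⟩ := ih1 he hh
    cases hv1 with | inr hw =>
    obtain ⟨S2, hS2, hh2, hv2, hval⟩ := ih2 ((hr.mono hS1).subst [] [] rfl hw) hh1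
    exact ⟨S2, hS1.trans hS2, hh2, hv2, hval⟩
  | new _ ih =>
    cases he with | @new _ _ σ he =>
    obtain ⟨S1, hS1, hh1, hv1, hval1⟩ := ih he hh
    exact ⟨S1 ++ [σ], hS1.trans (List.prefix_append _ _), hh1.append hv1 hval1,
      .loc (by rw [hh1.1]; simp), .loc⟩
  | deref _ hget ih =>
    cases he with | deref he =>
    obtain ⟨S1, hS1, hh1, hv1, _⟩ := ih he hh
    cases hv1 with | loc hn =>
    exact ⟨S1, hS1, hh1, hh1.2 _ _ _ hget hn⟩
  | assign _ _ ih1 ih2 =>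
    cases he with | assign he1 he2 =>
    obtain ⟨S1, hS1, hh1, hv1, _⟩ := ih1 he1 hh
    obtain ⟨S2, hS2, hh2, hv2, hval2⟩ := ih2 (he2.mono hS1) hh1
    cases hv1.mono hS2 with | loc hn =>
    exact ⟨S2, hS1.trans hS2, hh2.set hn hv2 hval2, .unit, .unit⟩

/-! ## STATEMENT 11: Type soundness of FG's evaluation at base type -/

theorem fg_type_soundness_bool
    {L : Type} [Lattice L] [BoundedOrder L]
    (pc l : L) (e : Exp) (h : Heap) (v : Exp)
    (hty : FGTyped ([] : List (FGTy L)) pc e (FGTy.bool l))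
    (hrun : FGEval [] e h v) :
    v = Exp.tt ∨ v = Exp.ff := by
  obtain ⟨S, -, -, hv, hval⟩ :=
    ErasedTyped.preservation hrun hty.erase ⟨rfl, by simp⟩
  simp only [FGTy.erase] at hv
  cases hval with
  | tt => exact .inl rfl
  | ff => exact .inr rfl
  | _ => cases hv
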